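/- For every positive integer n, the n-th Fourier sine coefficient of x·log Γ(x) on (0,1) satisfies 2·∫₀¹ x·log Γ(x)·sin(2nπx) dx = (γ + log n − H_n)/(2πn) + 1/(2πn²), where H_n is the n-th harmonic number. -/

import Mathlib

open Real

open Filter Topology MeasureTheory Set intervalIntegral

theorem sin_two_nat_mul_eq_sin_mul_sum (n : ℕ) (θ : ℝ) :
    sin (2 * n * θ) = sin θ * ∑ k ∈ Finset.range n, 2 * cos ((2 * k + 1) * θ) := by
  induction n with
  | zero => simp
  | succ n ih =>
    rw [Finset.sum_range_succ, mul_add, ← ih]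
    have h1 : 2 * ((n + 1 : ℕ) : ℝ) * θ = (2 * n + 1) * θ + θ := by push_cast; ring
    have h2 : 2 * (n : ℝ) * θ = (2 * n + 1) * θ - θ := by ring
    rw [h1, h2, sin_add, sin_sub]
    ring

theorem one_sub_cos_two_nat_mul_eq_sin_mul_sum (n : ℕ) (θ : ℝ) :
    1 - cos (2 * n * θ) = sin θ * ∑ k ∈ Finset.range n, 2 * sin ((2 * k + 1) * θ) := by
  induction n with
  | zero => simp
  | succ n ih =>
    rw [Finset.sum_range_succ, mul_add, ← ih]
    have h1 : 2 * ((n + 1 : ℕ) : ℝ) * θ = (2 * n + 1) * θ + θ := by push_cast; ring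
    have h2 : 2 * (n : ℝ) * θ = (2 * n + 1) * θ - θ := by ring
    rw [h1, h2, cos_add, cos_sub]
    ring

theorem two_mul_cos_odd_mul_cos (k : ℕ) (θ : ℝ) :
    2 * cos ((2 * k + 1) * θ) * cos θ =
      cos (2 * (k + 1 : ℕ) * θ) + cos (2 * k * θ) := by
  have h1 : 2 * ((k + 1 : ℕ) : ℝ) * θ = (2 * k + 1) * θ + θ := by push_cast; ring
  have h2 : 2 * (k : ℝ) * θ = (2 * k + 1) * θ - θ := by ring
  rw [h1, h2, cos_add, cos_sub]
  ring

theorem two_mul_sin_odd_mul_cos (k : ℕ) (θ : ℝ) :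
    2 * sin ((2 * k + 1) * θ) * cos θ =
      sin (2 * (k + 1 : ℕ) * θ) + sin (2 * k * θ) := by
  have h1 : 2 * ((k + 1 : ℕ) : ℝ) * θ = (2 * k + 1) * θ + θ := by push_cast; ring
  have h2 : 2 * (k : ℝ) * θ = (2 * k + 1) * θ - θ := by ring
  rw [h1, h2, sin_add, sin_sub]
  ring

theorem cos_two_nat_mul_pi (k : ℕ) : cos (2 * k * π) = 1 := by
  rw [show 2 * (k : ℝ) * π = k * (2 * π) by ring]
  exact cos_nat_mul_two_pi k

theorem sin_two_nat_mul_pi (k : ℕ) : sin (2 * k * π) = 0 := by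
  rw [show 2 * (k : ℝ) * π = ((2 * k : ℕ) : ℝ) * π by push_cast; ring]
  exact sin_nat_mul_pi _

theorem integral_cos_two_nat_mul_pi_mul (k : ℕ) :
    ∫ x in (0:ℝ)..1, cos (2 * k * (π * x)) = if k = 0 then 1 else 0 := by
  split_ifs with hk
  · simp [hk]
  · have hc : 2 * (k : ℝ) * π ≠ 0 := by positivity
    have h : ∀ x : ℝ, 2 * (k : ℝ) * (π * x) = 2 * k * π * x := fun x => by ring
    simp_rw [h]
    rw [integral_comp_mul_left (fun y => cos y) hc, integral_cos]
    simp [sin_two_nat_mul_pi]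

/-- At `k = 0` both sides vanish. -/
theorem integral_mul_sin_two_nat_mul_pi_mul (k : ℕ) :
    ∫ x in (0:ℝ)..1, x * sin (2 * k * (π * x)) = -(1 / (2 * π * k)) := by
  rcases Nat.eq_zero_or_pos k with rfl | hk
  · simp
  have hk' : (0 : ℝ) < k := by exact_mod_cast hk
  have hpi := pi_pos
  have key : ∀ x : ℝ, HasDerivAt (fun x => -x * cos (2 * k * (π * x)) / (2 * π * k)
      + sin (2 * k * (π * x)) / (2 * π * k) ^ 2) (x * sin (2 * k * (π * x))) x := by
    intro x
    have hl : HasDerivAt (fun x : ℝ => 2 * k * (π * x)) (2 * k * (π * 1)) x :=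
      ((hasDerivAt_id x).const_mul π).const_mul _
    convert! (((hasDerivAt_id x).neg.mul hl.cos).div_const (2 * π * k)).add
      (hl.sin.div_const ((2 * π * k) ^ 2)) using 1
    simp
    field_simp
    ring
  rw [integral_eq_sub_of_hasDerivAt (fun x _ => key x)
    (Continuous.intervalIntegrable (by fun_prop) _ _)]
  simp [cos_two_nat_mul_pi, sin_two_nat_mul_pi]
  ring

/-- At `k = 0` both sides vanish. -/
theorem integral_sin_two_nat_mul_zero_pi_div_two (k : ℕ) :
    ∫ s in (0:ℝ)..(π / 2), sin (2 * k * s) = (1 - (-1) ^ k) / (2 * k) := by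
  rcases Nat.eq_zero_or_pos k with rfl | hk
  · simp
  have hc : 2 * (k : ℝ) ≠ 0 := by positivity
  rw [integral_comp_mul_left (fun y => sin y) hc, integral_sin,
    show 2 * (k : ℝ) * (π / 2) = k * π by ring, cos_nat_mul_pi]
  simp
  ring

theorem intervalIntegrable_log_sin_pi_mul :
    IntervalIntegrable (fun x => log (sin (π * x))) volume 0 1 := by
  simpa [pi_ne_zero] using (intervalIntegrable_log_sin (a := 0) (b := π)).comp_mul_left (c := π)

theorem integral_log_sin_pi_mul : ∫ x in (0:ℝ)..1, log (sin (π * x)) = -log 2 := by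
  rw [integral_comp_mul_left (fun y => log (sin y)) pi_ne_zero]
  simp only [mul_zero, mul_one, integral_log_sin_zero_pi, smul_eq_mul]
  field_simp

theorem sin_pi_mul_pos {x : ℝ} (hx : x ∈ Ioo (0:ℝ) 1) : 0 < sin (π * x) :=
  sin_pos_of_pos_of_lt_pi (mul_pos pi_pos hx.1) (by nlinarith [pi_pos, hx.2])

theorem hasDerivAt_log_sin_pi_mul {x : ℝ} (hx : x ∈ Ioo (0:ℝ) 1) :
    HasDerivAt (fun x => log (sin (π * x))) (π * cos (π * x) / sin (π * x)) x := by
  have hl : HasDerivAt (fun x : ℝ => π * x) (π * 1) x := (hasDerivAt_id x).const_mul π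
  convert! hl.sin.log (sin_pi_mul_pos hx).ne' using 1
  ring

theorem integral_log_sin_pi_mul_mul_cos {n : ℕ} (hn : 0 < n) :
    ∫ x in (0:ℝ)..1, log (sin (π * x)) * cos (2 * n * (π * x)) = -(1 / (2 * n)) := by
  have hn' : (0 : ℝ) < n := by exact_mod_cast hn
  have hpi := pi_pos
  set S : ℝ → ℝ := fun x => ∑ k ∈ Finset.range n, 2 * cos ((2 * k + 1) * (π * x)) with hS
  have hSc : Continuous S := by fun_prop
  have hint : ∫ x in (0:ℝ)..1, S x * cos (π * x) = 1 := by
    simp_rw [hS, Finset.sum_mul, two_mul_cos_odd_mul_cos]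
    rw [integral_finsetSum (fun k _ => Continuous.intervalIntegrable (by fun_prop) _ _)]
    have : ∀ k ∈ Finset.range n, ∫ x in (0:ℝ)..1, (cos (2 * (k + 1 : ℕ) * (π * x))
        + cos (2 * k * (π * x))) = if k = 0 then 1 else 0 := by
      intro k _
      rw [integral_add (Continuous.intervalIntegrable (by fun_prop) _ _)
        (Continuous.intervalIntegrable (by fun_prop) _ _),
        integral_cos_two_nat_mul_pi_mul, integral_cos_two_nat_mul_pi_mul]
      simp
    rw [Finset.sum_congr rfl this]
    simp [hn]
  have hL := intervalIntegrable_log_sin_pi_mul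
  have hI1 : IntervalIntegrable (fun x => 2 * n * π * (log (sin (π * x)) * cos (2 * n * (π * x))))
      volume 0 1 :=
    (hL.mul_continuousOn (by fun_prop)).const_mul _
  have hI2 : IntervalIntegrable (fun x => π * (S x * cos (π * x))) volume 0 1 :=
    Continuous.intervalIntegrable (by fun_prop) _ _
  have ftc := integral_eq_sub_of_hasDerivAt_of_le (a := 0) (b := 1)
    (f := fun x => log (sin (π * x)) * sin (2 * n * (π * x)))
    (f' := fun x => 2 * n * π * (log (sin (π * x)) * cos (2 * n * (π * x)))
      + π * (S x * cos (π * x))) zero_le_one ?_ ?_ (hI1.add hI2)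
  · rw [integral_add hI1 hI2, intervalIntegral.integral_const_mul,
      intervalIntegral.integral_const_mul, hint] at ftc
    simp at ftc
    rw [← mul_right_inj' (by positivity : 2 * (n : ℝ) * π ≠ 0), eq_neg_of_add_eq_zero_left ftc]
    field_simp
  · have : (fun x => log (sin (π * x)) * sin (2 * n * (π * x)))
        = fun x => sin (π * x) * log (sin (π * x)) * S x := by
      ext x
      rw [sin_two_nat_mul_eq_sin_mul_sum]
      ring
    rw [this]
    exact ((Continuous.mul_log (by fun_prop)).mul hSc).continuousOn
  · intro x hx
    have hs := (sin_pi_mul_pos hx).ne'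
    have hl : HasDerivAt (fun x : ℝ => 2 * n * (π * x)) (2 * n * (π * 1)) x :=
      ((hasDerivAt_id x).const_mul π).const_mul _
    convert! (hasDerivAt_log_sin_pi_mul hx).mul hl.sin using 1
    rw [sin_two_nat_mul_eq_sin_mul_sum]
    simp only [hS]
    field_simp
    ring

theorem integral_mul_log_sin_pi_mul_mul_sin {n : ℕ} (hn : 0 < n) :
    ∫ x in (0:ℝ)..1, x * log (sin (π * x)) * sin (2 * n * (π * x)) =
      (log 2 + harmonic n - 1 / n) / (2 * π * n) := by
  have hn' : (0 : ℝ) < n := by exact_mod_cast hn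
  have hpi := pi_pos
  set S : ℝ → ℝ := fun x => ∑ k ∈ Finset.range n, 2 * sin ((2 * k + 1) * (π * x)) with hS
  have hSc : Continuous S := by fun_prop
  have hint : ∫ x in (0:ℝ)..1, x * (S x * cos (π * x)) = -((2 * harmonic n - 1 / n) / (2 * π)) := by
    simp_rw [hS, Finset.sum_mul, two_mul_sin_odd_mul_cos, Finset.mul_sum]
    rw [integral_finsetSum (fun k _ => Continuous.intervalIntegrable (by fun_prop) _ _)]
    have : ∀ k ∈ Finset.range n, ∫ x in (0:ℝ)..1, x * (sin (2 * (k + 1 : ℕ) * (π * x))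
        + sin (2 * k * (π * x))) = -(1 / (2 * π * (k + 1 : ℕ))) + -(1 / (2 * π * k)) := by
      intro k _
      simp_rw [mul_add]
      rw [integral_add (Continuous.intervalIntegrable (by fun_prop) _ _)
        (Continuous.intervalIntegrable (by fun_prop) _ _),
        integral_mul_sin_two_nat_mul_pi_mul, integral_mul_sin_two_nat_mul_pi_mul]
    rw [Finset.sum_congr rfl this]
    clear this hSc hS S hn' hn
    induction n with
    | zero => simp
    | succ m ih =>
      rw [Finset.sum_range_succ, ih, harmonic_succ]
      push_cast
      have : (m : ℝ) + 1 ≠ 0 := by positivity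
      rcases Nat.eq_zero_or_pos m with rfl | hm
      · simp; ring
      · have : (m : ℝ) ≠ 0 := by positivity
        field_simp
        ring
  have hL := intervalIntegrable_log_sin_pi_mul
  have hI0 : IntervalIntegrable (fun x => log (sin (π * x)) * cos (2 * n * (π * x)))
      volume 0 1 := hL.mul_continuousOn (by fun_prop)
  have hI1 : IntervalIntegrable
      (fun x => 2 * n * π * (x * log (sin (π * x)) * sin (2 * n * (π * x)))) volume 0 1 :=
    ((hL.continuousOn_mul (by fun_prop)).mul_continuousOn (by fun_prop)).const_mul _
  have hI2 : IntervalIntegrable (fun x => π * (x * (S x * cos (π * x)))) volume 0 1 :=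
    Continuous.intervalIntegrable (by fun_prop) _ _
  have ftc := integral_eq_sub_of_hasDerivAt_of_le (a := 0) (b := 1)
    (f := fun x => x * log (sin (π * x)) * (1 - cos (2 * n * (π * x))))
    (f' := fun x => 2 * n * π * (x * log (sin (π * x)) * sin (2 * n * (π * x)))
      + π * (x * (S x * cos (π * x)))
      + (log (sin (π * x)) - log (sin (π * x)) * cos (2 * n * (π * x))))
    zero_le_one ?_ ?_ ((hI1.add hI2).add (hL.sub hI0))
  · rw [integral_add (hI1.add hI2) (hL.sub hI0), integral_add hI1 hI2, integral_sub hL hI0,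
      intervalIntegral.integral_const_mul, intervalIntegral.integral_const_mul, hint,
      integral_log_sin_pi_mul, integral_log_sin_pi_mul_mul_cos hn] at ftc
    simp at ftc
    rw [eq_div_iff (by positivity)]
    field_simp at ftc ⊢
    linarith
  · have : (fun x => x * log (sin (π * x)) * (1 - cos (2 * n * (π * x))))
        = fun x => x * (sin (π * x) * log (sin (π * x)) * S x) := by
      ext x
      rw [one_sub_cos_two_nat_mul_eq_sin_mul_sum]
      ring
    rw [this]
    exact (continuous_id.mul ((Continuous.mul_log (by fun_prop)).mul hSc)).continuousOn
  · intro x hx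
    have hs := (sin_pi_mul_pos hx).ne'
    have hl : HasDerivAt (fun x : ℝ => 2 * n * (π * x)) (2 * n * (π * 1)) x :=
      ((hasDerivAt_id x).const_mul π).const_mul _
    convert! ((hasDerivAt_id x).mul (hasDerivAt_log_sin_pi_mul hx)).mul (hl.cos.const_sub 1) using 1
    have h := one_sub_cos_two_nat_mul_eq_sin_mul_sum n (π * x)
    rw [show (∑ k ∈ Finset.range n, 2 * sin ((2 * k + 1) * (π * x))) = S x from rfl] at h
    have h' : cos (2 * n * (π * x)) = 1 - sin (π * x) * S x := by linarith
    simp only [Pi.mul_apply, id, h']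
    field_simp
    ring

/-- The Riemann–Lebesgue lemma for cosine integrals over a bounded interval. -/
theorem tendsto_integral_cos_mul_atTop {f : ℝ → ℝ} {a b : ℝ} (hab : a ≤ b)
    (hf : IntervalIntegrable f volume a b) :
    Tendsto (fun w : ℝ => ∫ s in a..b, cos (w * s) * f s) atTop (𝓝 0) := by
  have h := Real.tendsto_integral_exp_smul_cocompact
    (indicator (Ioc a b) fun s => (f s : ℂ))
  have hw : Tendsto (fun w : ℝ => w / (2 * π)) atTop (cocompact ℝ) :=
    (tendsto_id.atTop_div_const two_pi_pos).mono_right atTop_le_cocompact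
  have h2 := (Complex.continuous_re.tendsto _).comp (h.comp hw)
  rw [Complex.zero_re] at h2
  refine h2.congr fun w => ?_
  have hfI : IntegrableOn (fun s => (f s : ℂ)) (Ioc a b) :=
    ((intervalIntegrable_iff_integrableOn_Ioc_of_le hab).1 hf).ofReal
  have hexp : ∀ s : ℝ, (fourierChar (-(s * (w / (2 * π)))) : ℂ) =
      Complex.exp ((-(w * s) : ℝ) * Complex.I) := by
    intro s
    rw [Real.fourierChar_apply]
    congr 3
    field_simp
  have hind : (fun v : ℝ => fourierChar (-(v * (w / (2 * π)))) •
        indicator (Ioc a b) (fun s => (f s : ℂ)) v)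
      = indicator (Ioc a b) fun s => Complex.exp ((-(w * s) : ℝ) * Complex.I) * f s := by
    ext v
    by_cases hv : v ∈ Ioc a b
    · simp only [indicator_of_mem hv, Circle.smul_def, hexp, smul_eq_mul]
    · simp [indicator_of_notMem hv]
  have hint : IntegrableOn (fun s : ℝ => Complex.exp ((-(w * s) : ℝ) * Complex.I) * f s)
      (Ioc a b) := by
    refine Integrable.bdd_mul (c := 1) hfI (Continuous.aestronglyMeasurable (by fun_prop)) ?_
    exact Eventually.of_forall fun s => (Complex.norm_exp_ofReal_mul_I _).le
  simp only [Function.comp_apply, hind]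
  rw [MeasureTheory.integral_indicator measurableSet_Ioc, intervalIntegral.integral_of_le hab]
  have hre := integral_re (𝕜 := ℂ) hint
  simp only [RCLike.re_to_complex] at hre
  rw [← hre]
  refine MeasureTheory.integral_congr_ae (Eventually.of_forall fun s => ?_)
  simp only [Complex.re_mul_ofReal, Complex.exp_ofReal_mul_I_re, cos_neg]

theorem sinc_pos_of_mem_Icc {s : ℝ} (hs : s ∈ Icc 0 (π / 2)) : 0 < sinc s := by
  rcases eq_or_ne s 0 with rfl | h0
  · simp
  · have hp : 0 < s := lt_of_le_of_ne hs.1 h0.symm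
    rw [sinc_of_ne_zero h0]
    exact div_pos (sin_pos_of_pos_of_lt_pi hp (by linarith [hs.2, pi_pos])) hp

theorem hasDerivAt_neg_log_sinc {s : ℝ} (hs : s ∈ Ioo 0 (π / 2)) :
    HasDerivAt (fun s => -log (sinc s)) (1 / s - cos s / sin s) s := by
  have hsin : 0 < sin s := sin_pos_of_pos_of_lt_pi hs.1 (by linarith [hs.2, pi_pos])
  have h : HasDerivAt (fun s => log s - log (sin s)) (1 / s - cos s / sin s) s := by
    rw [one_div]
    exact (hasDerivAt_log hs.1.ne').sub ((hasDerivAt_sin s).log hsin.ne')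
  refine h.congr_of_eventuallyEq ?_
  filter_upwards [Ioo_mem_nhds hs.1 hs.2] with t ht
  have ht' : 0 < sin t := sin_pos_of_pos_of_lt_pi ht.1 (by linarith [ht.2, pi_pos])
  rw [sinc_of_ne_zero ht.1.ne', log_div ht'.ne' ht.1.ne']
  ring

theorem continuousOn_neg_log_sinc : ContinuousOn (fun s => -log (sinc s)) (Icc 0 (π / 2)) :=
  (continuous_sinc.continuousOn.log fun _ hs => (sinc_pos_of_mem_Icc hs).ne').neg

theorem intervalIntegrable_inv_sub_cot :
    IntervalIntegrable (fun s => 1 / s - cos s / sin s) volume 0 (π / 2) := by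
  have hpi : (0 : ℝ) ≤ π / 2 := by positivity
  refine (intervalIntegrable_iff_integrableOn_Ioc_of_le hpi).2
    (integrableOn_deriv_of_nonneg continuousOn_neg_log_sinc
      (fun s hs => hasDerivAt_neg_log_sinc hs) fun s hs => ?_)
  have hsin : 0 < sin s := sin_pos_of_pos_of_lt_pi hs.1 (by linarith [hs.2, pi_pos])
  have hcos : 0 < cos s := cos_pos_of_mem_Ioo ⟨by linarith [hs.1], hs.2⟩
  have htan := (lt_tan hs.1 hs.2).le
  rw [tan_eq_sin_div_cos, le_div_iff₀ hcos] at htan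
  rw [sub_nonneg, div_le_div_iff₀ hsin hs.1]
  linarith

theorem integral_inv_sub_cot :
    ∫ s in (0:ℝ)..(π / 2), (1 / s - cos s / sin s) = log (π / 2) := by
  have hpi : (0 : ℝ) < π / 2 := by positivity
  rw [integral_eq_sub_of_hasDerivAt_of_le hpi.le continuousOn_neg_log_sinc
    (fun s hs => hasDerivAt_neg_log_sinc hs) intervalIntegrable_inv_sub_cot]
  simp [sinc_of_ne_zero hpi.ne', sin_pi_div_two]
  rw [← log_inv, inv_div]

theorem integral_sum_sin_odd_mul_cos (K : ℕ) :
    ∫ s in (0:ℝ)..(π / 2),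
      (∑ k ∈ Finset.range (2 * K), 2 * sin ((2 * k + 1) * s)) * cos s =
      2 * harmonic (2 * K) - harmonic K := by
  simp_rw [Finset.sum_mul, two_mul_sin_odd_mul_cos]
  rw [integral_finsetSum (fun k _ => Continuous.intervalIntegrable (by fun_prop) _ _)]
  have : ∀ k ∈ Finset.range (2 * K), ∫ s in (0:ℝ)..(π / 2), (sin (2 * (k + 1 : ℕ) * s)
      + sin (2 * k * s)) = (1 - (-1) ^ (k + 1)) / (2 * (k + 1 : ℕ)) + (1 - (-1) ^ k) / (2 * k) := by
    intro k _
    rw [integral_add (Continuous.intervalIntegrable (by fun_prop) _ _)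
      (Continuous.intervalIntegrable (by fun_prop) _ _),
      integral_sin_two_nat_mul_zero_pi_div_two, integral_sin_two_nat_mul_zero_pi_div_two]
  rw [Finset.sum_congr rfl this]
  clear this
  induction K with
  | zero => simp
  | succ m ih =>
    rw [show 2 * (m + 1) = 2 * m + 1 + 1 by ring, Finset.sum_range_succ, Finset.sum_range_succ, ih,
      harmonic_succ, harmonic_succ, harmonic_succ]
    have h1 : (-1 : ℝ) ^ (2 * m) = 1 := by simp
    simp only [pow_succ, h1]
    push_cast
    field_simp
    ring

theorem intervalIntegrable_one_sub_cos_mul_div (c a b : ℝ) :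
    IntervalIntegrable (fun s => (1 - cos (c * s)) / s) volume a b := by
  have h : (fun s => (1 - cos (c * s)) / s) = fun s => c * (sinc (c / 2 * s) * sin (c / 2 * s)) := by
    ext s
    rcases eq_or_ne (c / 2 * s) 0 with h0 | h0
    · have : c * s = 0 := by linarith
      simp [this, h0]
    · have hc : c ≠ 0 := by rintro rfl; simp at h0
      have hs : s ≠ 0 := by rintro rfl; simp at h0
      rw [sinc_of_ne_zero h0, show c * s = 2 * (c / 2 * s) by ring, cos_two_mul, cos_sq']
      field_simp
      ring
  rw [h]
  have := continuous_sinc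
  exact Continuous.intervalIntegrable (by fun_prop) _ _

/-- The asymptotics of the entire cosine integral `∫ (1 - cos t) / t` along `t = 2πK`. -/
theorem tendsto_integral_one_sub_cos_div_sub_log :
    Tendsto (fun K : ℕ => (∫ s in (0:ℝ)..(π / 2), (1 - cos (4 * K * s)) / s) - log K) atTop
      (𝓝 (eulerMascheroniConstant + log (2 * π))) := by
  have hpi : (0 : ℝ) ≤ π / 2 := by positivity
  have hI := intervalIntegrable_inv_sub_cot
  have hIc : ∀ w : ℝ, IntervalIntegrable (fun s => cos (w * s) * (1 / s - cos s / sin s)) volume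
      0 (π / 2) := fun w => hI.continuousOn_mul (by fun_prop)
  have hdecomp : ∀ K : ℕ, (∫ s in (0:ℝ)..(π / 2), (1 - cos (4 * K * s)) / s) =
      log (π / 2) - (∫ s in (0:ℝ)..(π / 2), cos (4 * K * s) * (1 / s - cos s / sin s))
        + (2 * harmonic (2 * K) - harmonic K) := by
    intro K
    rw [← integral_inv_sub_cot, ← integral_sub hI (hIc _), ← integral_sum_sin_odd_mul_cos,
      ← integral_add (hI.sub (hIc _)) (Continuous.intervalIntegrable (by fun_prop) _ _)]
    refine integral_congr_ae (Eventually.of_forall fun s hs => ?_)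
    rw [uIoc_of_le hpi] at hs
    have hsin : 0 < sin s := sin_pos_of_pos_of_lt_pi hs.1 (by linarith [hs.2, pi_pos])
    have h := one_sub_cos_two_nat_mul_eq_sin_mul_sum (2 * K) s
    rw [show 2 * ((2 * K : ℕ) : ℝ) * s = 4 * K * s by push_cast; ring] at h
    have hs0 := hs.1.ne'
    generalize ∑ k ∈ Finset.range (2 * K), 2 * sin ((2 * k + 1) * s) = S at h ⊢
    rw [show cos (4 * K * s) = 1 - sin s * S by linarith]
    field_simp
    ring
  have hRL : Tendsto (fun K : ℕ => ∫ s in (0:ℝ)..(π / 2),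
      cos (4 * K * s) * (1 / s - cos s / sin s)) atTop (𝓝 0) :=
    (tendsto_integral_cos_mul_atTop hpi hI).comp
      (tendsto_natCast_atTop_atTop.const_mul_atTop (by norm_num : (0:ℝ) < 4))
  have hγ := tendsto_harmonic_sub_log
  have hγ2 : Tendsto (fun K : ℕ => (harmonic (2 * K) : ℝ) - log ((2 * K : ℕ) : ℝ)) atTop
      (𝓝 eulerMascheroniConstant) :=
    hγ.comp (tendsto_id.const_mul_atTop' (by norm_num : 0 < 2))
  have hlim := (((tendsto_const_nhds (x := log (π / 2))).sub hRL).add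
    ((hγ2.const_mul 2).sub hγ)).add_const (2 * log 2)
  have hval : log (π / 2) - 0 + (2 * eulerMascheroniConstant - eulerMascheroniConstant)
      + 2 * log 2 = eulerMascheroniConstant + log (2 * π) := by
    rw [log_div pi_ne_zero two_ne_zero, log_mul two_ne_zero pi_ne_zero]
    ring
  rw [hval] at hlim
  refine hlim.congr' ?_
  filter_upwards [eventually_gt_atTop 0] with K hK
  have hK' : (K : ℝ) ≠ 0 := by positivity
  rw [hdecomp]
  push_cast
  rw [log_mul two_ne_zero hK']
  ring

theorem integral_log_mul_sin_two_nat_mul_pi_mul {n : ℕ} (hn : 0 < n) {M : ℕ} (hM : 0 < M) :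
    ∫ t in (0:ℝ)..M, log t * sin (2 * n * (π * t)) =
      -((∫ s in (0:ℝ)..(π / 2), (1 - cos (4 * (n * M : ℕ) * s)) / s) / (2 * π * n)) := by
  have hn' : (0 : ℝ) < n := by exact_mod_cast hn
  have hM' : (0 : ℝ) < M := by exact_mod_cast hM
  have hpi := pi_pos
  have hsubst : (∫ s in (0:ℝ)..(π / 2), (1 - cos (4 * (n * M : ℕ) * s)) / s) =
      ∫ t in (0:ℝ)..M, (1 - cos (2 * n * π * t)) / t := by
    have h := mul_integral_comp_mul_left (a := 0) (b := π / 2)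
      (f := fun t => (1 - cos (2 * n * π * t)) / t) (c := 2 * (M : ℝ) / π)
    rw [mul_zero, show 2 * (M : ℝ) / π * (π / 2) = M by field_simp] at h
    rw [← h, ← intervalIntegral.integral_const_mul]
    refine integral_congr fun s _ => ?_
    rw [show 2 * n * π * (2 * (M : ℝ) / π * s) = 4 * (n * M : ℕ) * s by
      push_cast; field_simp; ring]
    rcases eq_or_ne s 0 with rfl | hs
    · simp
    · field_simp
  rw [hsubst]
  have hI1 : IntervalIntegrable (fun t => 2 * n * π * (log t * sin (2 * n * (π * t))))
      volume 0 M := (intervalIntegrable_log'.mul_continuousOn (by fun_prop)).const_mul _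
  have hI2 := intervalIntegrable_one_sub_cos_mul_div (2 * n * π) 0 M
  have ftc := integral_eq_sub_of_hasDerivAt_of_le (a := 0) (b := M)
    (f := fun t => log t * (1 - cos (2 * n * π * t)))
    (f' := fun t => 2 * n * π * (log t * sin (2 * n * (π * t)))
      + (1 - cos (2 * n * π * t)) / t) hM'.le ?_ ?_ (hI1.add hI2)
  · rw [integral_add hI1 hI2, intervalIntegral.integral_const_mul] at ftc
    have : cos (2 * n * π * M) = 1 := by
      simpa [mul_comm, mul_assoc, mul_left_comm] using cos_two_nat_mul_pi (n * M)
    simp [this] at ftc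
    rw [← neg_div, eq_div_iff (by positivity)]
    linarith
  · have : (fun t => log t * (1 - cos (2 * n * π * t)))
        = fun t => t * log t * (2 * n * π * (sinc (n * π * t) * sin (n * π * t))) := by
      ext t
      rcases eq_or_ne t 0 with rfl | ht
      · simp
      · rw [sinc_of_ne_zero (by positivity), show 2 * n * π * t = 2 * (n * π * t) by ring,
          cos_two_mul, cos_sq']
        field_simp
        ring
    rw [this]
    have := continuous_sinc
    exact (continuous_mul_log.mul (by fun_prop)).continuousOn
  · intro t ht
    have hl : HasDerivAt (fun t : ℝ => 2 * n * π * t) (2 * n * π * 1) t :=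
      (hasDerivAt_id t).const_mul _
    convert! (hasDerivAt_log ht.1.ne').mul (hl.cos.const_sub 1) using 1
    rw [show 2 * n * (π * t) = 2 * n * π * t by ring]
    have := ht.1.ne'
    field_simp
    ring

theorem abs_log_Gamma_sub_logGammaSeq_le {x : ℝ} (hx : 0 < x) (hx1 : x ≤ 1) {N : ℕ} (hN : N ≠ 0) :
    |log (Gamma x) - BohrMollerup.logGammaSeq x N| ≤ log (N + 1) - log N := by
  have hfeq : ∀ {y : ℝ}, 0 < y → (log ∘ Gamma) (y + 1) = (log ∘ Gamma) y + log y := by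
    intro y hy
    rw [Function.comp_apply, Gamma_add_one hy.ne', log_mul hy.ne' (Gamma_pos_of_pos hy).ne',
      add_comm, Function.comp_apply]
  have h1 := BohrMollerup.le_logGammaSeq convexOn_log_Gamma hfeq hx hx1 N
  have h2 := BohrMollerup.ge_logGammaSeq convexOn_log_Gamma hfeq hx hN
  simp only [Function.comp_apply, Gamma_one, log_one, zero_add] at h1 h2
  have h3 : log N ≤ log (N + 1) := log_le_log (by positivity) (by linarith)
  rw [abs_of_nonneg (by linarith)]
  nlinarith

theorem intervalIntegrable_log_Gamma :
    IntervalIntegrable (fun x => log (Gamma x)) volume 0 1 := by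
  have h1 : IntervalIntegrable (fun x => log (Gamma (x + 1))) volume 0 1 := by
    refine ContinuousOn.intervalIntegrable fun x hx => ContinuousAt.continuousWithinAt ?_
    rw [uIcc_of_le zero_le_one] at hx
    have hx' : 0 < x + 1 := by linarith [hx.1]
    have hG : ContinuousAt Gamma (x + 1) :=
      (differentiableAt_Gamma fun m => by
        have : (0:ℝ) ≤ m := m.cast_nonneg
        linarith).continuousAt
    exact (ContinuousAt.comp (f := fun y : ℝ => y + 1) hG (by fun_prop)).log
      (Gamma_pos_of_pos hx').ne'
  refine (h1.sub intervalIntegrable_log').congr fun x hx => ?_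
  rw [uIoc_of_le zero_le_one] at hx
  rw [Gamma_add_one hx.1.ne', log_mul hx.1.ne' (Gamma_pos_of_pos hx.1).ne']
  ring

theorem intervalIntegrable_log_add (m : ℝ) (a b : ℝ) :
    IntervalIntegrable (fun x => log (x + m)) volume a b := by
  simpa using (intervalIntegrable_log' (a := a + m) (b := b + m)).comp_add_right m

theorem intervalIntegrable_logGammaSeq (N : ℕ) :
    IntervalIntegrable (fun x => BohrMollerup.logGammaSeq x N) volume 0 1 := by
  unfold BohrMollerup.logGammaSeq
  refine IntervalIntegrable.sub (Continuous.intervalIntegrable (by fun_prop) _ _) ?_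
  simpa only [Finset.sum_fn] using IntervalIntegrable.sum (Finset.range (N + 1))
    (f := fun (m : ℕ) x => log (x + m)) fun m _ => intervalIntegrable_log_add _ _ _

theorem integral_logGammaSeq_mul_sin {n : ℕ} (hn : 0 < n) (N : ℕ) :
    ∫ x in (0:ℝ)..1, BohrMollerup.logGammaSeq x N * sin (2 * n * (π * x)) =
      ((∫ s in (0:ℝ)..(π / 2), (1 - cos (4 * (n * (N + 1) : ℕ) * s)) / s) - log N)
        / (2 * π * n) := by
  have hn' : (0 : ℝ) < n := by exact_mod_cast hn
  have hsin0 : ∫ x in (0:ℝ)..1, sin (2 * n * (π * x)) = 0 := by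
    have hc : 2 * (n : ℝ) * π ≠ 0 := by positivity
    simp_rw [← mul_assoc]
    rw [integral_comp_mul_left (fun y => sin y) hc, integral_sin]
    simp [cos_two_nat_mul_pi]
  have hIs : ∀ m : ℕ, IntervalIntegrable (fun x => log (x + m) * sin (2 * n * (π * x)))
      volume 0 1 := fun m => (intervalIntegrable_log_add _ _ _).mul_continuousOn (by fun_prop)
  have hsum : ∑ m ∈ Finset.range (N + 1), ∫ x in (0:ℝ)..1, log (x + m) * sin (2 * n * (π * x)) =
      ∫ t in (0:ℝ)..(N + 1 : ℕ), log t * sin (2 * n * (π * t)) := by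
    have h := sum_integral_adjacent_intervals (μ := volume) (a := fun k : ℕ => (k : ℝ))
      (n := N + 1) (f := fun t => log t * sin (2 * n * (π * t)))
      (fun k _ => intervalIntegrable_log'.mul_continuousOn (by fun_prop))
    rw [Nat.cast_zero] at h
    rw [← h]
    refine Finset.sum_congr rfl fun m _ => ?_
    have h2 := integral_comp_add_right (a := 0) (b := 1)
      (fun t => log t * sin (2 * n * (π * t))) (m : ℝ)
    rw [show (((m + 1 : ℕ)) : ℝ) = 1 + m by push_cast; ring]
    rw [zero_add] at h2
    rw [← h2]
    refine integral_congr fun x _ => ?_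
    congr 1
    rw [show 2 * n * (π * (x + m)) = 2 * n * (π * x) + (n * m : ℕ) * (2 * π) by push_cast; ring,
      sin_add_nat_mul_two_pi]
  have hexp : ∀ x : ℝ, BohrMollerup.logGammaSeq x N * sin (2 * n * (π * x)) =
      log N * (x * sin (2 * n * (π * x))) + log (N.factorial) * sin (2 * n * (π * x))
        - ∑ m ∈ Finset.range (N + 1), log (x + m) * sin (2 * n * (π * x)) := by
    intro x
    rw [BohrMollerup.logGammaSeq, ← Finset.sum_mul]
    ring
  simp_rw [hexp]
  rw [integral_sub (Continuous.intervalIntegrable (by fun_prop) _ _)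
      (by simpa only [Finset.sum_fn] using
        IntervalIntegrable.sum (Finset.range (N + 1)) fun m _ => hIs m),
    integral_add (Continuous.intervalIntegrable (by fun_prop) _ _)
      (Continuous.intervalIntegrable (by fun_prop) _ _),
    integral_finsetSum fun m _ => hIs m, intervalIntegral.integral_const_mul,
    intervalIntegral.integral_const_mul, hsin0, hsum,
    integral_log_mul_sin_two_nat_mul_pi_mul hn N.succ_pos, integral_mul_sin_two_nat_mul_pi_mul]
  ring

/-- The sine coefficients in Kummer's Fourier expansion of `log Γ`. -/
theorem integral_log_Gamma_mul_sin {n : ℕ} (hn : 0 < n) :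
    ∫ x in (0:ℝ)..1, log (Gamma x) * sin (2 * n * (π * x)) =
      (eulerMascheroniConstant + log (2 * π * n)) / (2 * π * n) := by
  have hn' : (0 : ℝ) < n := by exact_mod_cast hn
  have hdiff := tendsto_log_nat_add_one_sub_log
  have hlim1 : Tendsto (fun N : ℕ =>
      ∫ x in (0:ℝ)..1, BohrMollerup.logGammaSeq x N * sin (2 * n * (π * x))) atTop
      (𝓝 (∫ x in (0:ℝ)..1, log (Gamma x) * sin (2 * n * (π * x)))) := by
    rw [tendsto_iff_norm_sub_tendsto_zero]
    refine squeeze_zero' (Eventually.of_forall fun _ => norm_nonneg _) ?_ hdiff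
    filter_upwards [eventually_ne_atTop 0] with N hN
    rw [← integral_sub ((intervalIntegrable_logGammaSeq N).mul_continuousOn (by fun_prop))
      (intervalIntegrable_log_Gamma.mul_continuousOn (by fun_prop))]
    have hb := norm_integral_le_of_norm_le_const (a := 0) (b := 1)
      (f := fun x => BohrMollerup.logGammaSeq x N * sin (2 * n * (π * x))
        - log (Gamma x) * sin (2 * n * (π * x))) (C := log (N + 1) - log N) ?_
    · simpa using hb
    · intro x hx
      rw [uIoc_of_le zero_le_one] at hx
      rw [← sub_mul, norm_mul, norm_sub_rev, Real.norm_eq_abs, Real.norm_eq_abs]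
      calc _ ≤ |log (Gamma x) - BohrMollerup.logGammaSeq x N| * 1 := by
            gcongr; exact abs_sin_le_one _
        _ ≤ _ := by
          rw [mul_one]; exact abs_log_Gamma_sub_logGammaSeq_le hx.1 hx.2 hN
  refine tendsto_nhds_unique hlim1 ?_
  simp_rw [integral_logGammaSeq_mul_sin hn]
  refine Tendsto.div_const ?_ _
  have hK : Tendsto (fun N : ℕ => n * (N + 1)) atTop atTop :=
    (tendsto_add_atTop_nat 1).const_mul_atTop' hn
  have h := ((tendsto_integral_one_sub_cos_div_sub_log.comp hK).add hdiff).add_const (log n)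
  have hval : eulerMascheroniConstant + log (2 * π) + 0 + log n =
      eulerMascheroniConstant + log (2 * π * n) := by
    rw [log_mul two_pi_pos.ne' hn'.ne']
    ring
  rw [hval] at h
  refine h.congr fun N => ?_
  have hN : (N : ℝ) + 1 ≠ 0 := by positivity
  simp only [Function.comp_apply]
  push_cast
  rw [log_mul hn'.ne' hN]
  ring

theorem log_Gamma_one_sub {x : ℝ} (hx : x ∈ Ioo (0:ℝ) 1) :
    log (Gamma (1 - x)) = log π - log (sin (π * x)) - log (Gamma x) := by
  have hs := sin_pi_mul_pos hx
  have h := congrArg log (Gamma_mul_Gamma_one_sub x)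
  rw [log_mul (Gamma_pos_of_pos hx.1).ne' (Gamma_pos_of_pos (by linarith [hx.2])).ne',
    log_div pi_ne_zero hs.ne'] at h
  linarith

/-- For every positive integer `n`, the `n`-th Fourier sine coefficient of
`x·log Γ(x)` on `(0,1)`:
`2·∫₀¹ x·log Γ(x)·sin(2nπx) dx = (γ + log n − H_n)/(2πn) + 1/(2πn²)`,
where `H_n` is the n-th harmonic number and `γ` is the Euler–Mascheroni constant. -/
theorem fourier_sin_coeff_x_mul_log_Gamma (n : ℕ) (hn : 0 < n) :
    2 * ∫ x in (0:ℝ)..1, x * Real.log (Real.Gamma x) * Real.sin (2 * n * π * x) =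
      (Real.eulerMascheroniConstant + Real.log n - (harmonic n : ℝ)) / (2 * π * n)
        + 1 / (2 * π * n ^ 2) := by
  have hn' : (0 : ℝ) < n := by exact_mod_cast hn
  have hpi := pi_pos
  have harg : ∀ x : ℝ, 2 * (n : ℝ) * π * x = 2 * n * (π * x) := fun x => by ring
  simp_rw [harg]
  have hG := intervalIntegrable_log_Gamma
  have hB : IntervalIntegrable (fun x => log (Gamma x) * sin (2 * n * (π * x))) volume 0 1 :=
    hG.mul_continuousOn (by fun_prop)
  have hI : IntervalIntegrable (fun x => x * log (Gamma x) * sin (2 * n * (π * x))) volume 0 1 :=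
    (hG.continuousOn_mul (by fun_prop)).mul_continuousOn (by fun_prop)
  have hD : IntervalIntegrable (fun x => x * log (sin (π * x)) * sin (2 * n * (π * x)))
      volume 0 1 :=
    (intervalIntegrable_log_sin_pi_mul.continuousOn_mul (by fun_prop)).mul_continuousOn
      (by fun_prop)
  have hX : IntervalIntegrable (fun x => log π * (x * sin (2 * n * (π * x)))) volume 0 1 :=
    Continuous.intervalIntegrable (by fun_prop) _ _
  have hreflect : ∫ x in (0:ℝ)..1, x * log (Gamma (1 - x)) * sin (2 * n * (π * x)) =
      (∫ x in (0:ℝ)..1, x * log (Gamma x) * sin (2 * n * (π * x)))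
        - ∫ x in (0:ℝ)..1, log (Gamma x) * sin (2 * n * (π * x)) := by
    have h := integral_comp_sub_left (a := 0) (b := 1)
      (fun x => x * log (Gamma (1 - x)) * sin (2 * n * (π * x))) 1
    rw [sub_self, sub_zero] at h
    rw [← h, ← integral_sub hI hB]
    refine integral_congr fun x _ => ?_
    have hsin : sin (2 * n * (π * (1 - x))) = -sin (2 * n * (π * x)) := by
      rw [show 2 * n * (π * (1 - x)) = n * (2 * π) - 2 * n * (π * x) by ring,
        sin_nat_mul_two_pi_sub]
    simp only [sub_sub_cancel, hsin]
    ring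
  have hformula : ∫ x in (0:ℝ)..1, x * log (Gamma (1 - x)) * sin (2 * n * (π * x)) =
      log π * (∫ x in (0:ℝ)..1, x * sin (2 * n * (π * x)))
        - (∫ x in (0:ℝ)..1, x * log (sin (π * x)) * sin (2 * n * (π * x)))
        - ∫ x in (0:ℝ)..1, x * log (Gamma x) * sin (2 * n * (π * x)) := by
    rw [← intervalIntegral.integral_const_mul, ← integral_sub hX hD, ← integral_sub (hX.sub hD) hI]
    refine integral_congr_Ioo_of_le zero_le_one fun x hx => ?_
    simp only [log_Gamma_one_sub hx]
    ring
  rw [integral_log_Gamma_mul_sin hn] at hreflect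
  rw [integral_mul_sin_two_nat_mul_pi_mul, integral_mul_log_sin_pi_mul_mul_sin hn, hreflect]
    at hformula
  have hsolve : 2 * ∫ x in (0:ℝ)..1, x * log (Gamma x) * sin (2 * n * (π * x)) =
      (eulerMascheroniConstant + log (2 * π * n)) / (2 * π * n) + log π * -(1 / (2 * π * n))
        - (log 2 + harmonic n - 1 / n) / (2 * π * n) := by linarith
  rw [hsolve, log_mul two_pi_pos.ne' hn'.ne', log_mul two_ne_zero hpi.ne']
  field_simp
  ring
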